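/- There is no duality gap between the continuous-time primal LP on measures and the continuous-time dual LP on functions: p* = d*, i.e., sup{ μ₀(X) : (μ₀, μ, μ̂₀) feasible for the primal LP } = inf{ ∫_X w dλ : (v, w) feasible for the dual LP }. -/

import Mathlib

open MeasureTheory

/-- The (topological) support of a Borel measure. -/
def msupport {α : Type*} [TopologicalSpace α] [MeasurableSpace α] (μ : Measure α) : Set α :=
  {x | ∀ s : Set α, IsOpen s → x ∈ s → 0 < μ s}

/-- The continuous-time discounted Liouville equation for the pair `(μ₀, μ)`. -/
def LiouvilleC {n m : ℕ}
    (f : EuclideanSpace ℝ (Fin n) → EuclideanSpace ℝ (Fin m) → EuclideanSpace ℝ (Fin n))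
    (β : ℝ) (μ₀ : Measure (EuclideanSpace ℝ (Fin n)))
    (μ : Measure (EuclideanSpace ℝ (Fin n) × EuclideanSpace ℝ (Fin m))) : Prop :=
  ∀ v : EuclideanSpace ℝ (Fin n) → ℝ, ContDiff ℝ 1 v →
    β * ∫ p, v p.1 ∂μ = ∫ x, v x ∂μ₀ + ∫ p, fderiv ℝ v p.1 (f p.1 p.2) ∂μ

/-- Feasibility of a triple `(μ₀, μ, μ̂₀)` for the continuous-time primal LP. -/
def FeasibleC {n m : ℕ} (X : Set (EuclideanSpace ℝ (Fin n)))
    (U : Set (EuclideanSpace ℝ (Fin m)))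
    (f : EuclideanSpace ℝ (Fin n) → EuclideanSpace ℝ (Fin m) → EuclideanSpace ℝ (Fin n))
    (β : ℝ) (μ₀ : Measure (EuclideanSpace ℝ (Fin n)))
    (μ : Measure (EuclideanSpace ℝ (Fin n) × EuclideanSpace ℝ (Fin m)))
    (μh : Measure (EuclideanSpace ℝ (Fin n))) : Prop :=
  IsFiniteMeasure μ₀ ∧ IsFiniteMeasure μ ∧ IsFiniteMeasure μh ∧
  msupport μ₀ ⊆ X ∧ msupport μh ⊆ X ∧ msupport μ ⊆ X ×ˢ U ∧
  LiouvilleC f β μ₀ μ ∧ μ₀ + μh = volume.restrict X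

/-- Feasibility of a pair `(v, w)` (with `v` continuously differentiable and `w` continuous)
for the continuous-time dual LP. -/
def DualFeasC {n m : ℕ} (X : Set (EuclideanSpace ℝ (Fin n)))
    (U : Set (EuclideanSpace ℝ (Fin m)))
    (f : EuclideanSpace ℝ (Fin n) → EuclideanSpace ℝ (Fin m) → EuclideanSpace ℝ (Fin n))
    (β : ℝ) (v w : EuclideanSpace ℝ (Fin n) → ℝ) : Prop :=
  ContDiff ℝ 1 v ∧ Continuous w ∧
  (∀ x ∈ X, ∀ u ∈ U, fderiv ℝ v x (f x u) ≤ β * v x) ∧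
  (∀ x ∈ X, v x + 1 ≤ w x) ∧
  (∀ x ∈ X, 0 ≤ w x)

/-- A linear functional on `P` that is nonnegative on the preimage of the positive cone under `A`
factors through `A` as a positive functional, provided the range of `A` is cofinal. -/
lemma exists_positive_functional_comp_eq {P Z : Type*} [AddCommGroup P] [Module ℝ P]
    [AddCommGroup Z] [PartialOrder Z] [IsOrderedAddMonoid Z] [Module ℝ Z] [PosSMulMono ℝ Z]
    (A : P →ₗ[ℝ] Z) (J : P →ₗ[ℝ] ℝ) (hJ : ∀ p, 0 ≤ A p → 0 ≤ J p)
    (hA : ∀ z, ∃ p, 0 ≤ A p + z) :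
    ∃ g : Z →ₗ[ℝ] ℝ, (∀ p, g (A p) = J p) ∧ ∀ z, 0 ≤ z → 0 ≤ g z := by
  have hker : LinearMap.ker A ≤ LinearMap.ker J := by
    intro p hp
    rw [LinearMap.mem_ker] at hp ⊢
    have h₁ := hJ p hp.ge
    have h₂ := hJ (-p) (by simp [hp])
    rw [map_neg] at h₂
    linarith
  let φ : LinearMap.range A →ₗ[ℝ] ℝ :=
    (LinearMap.ker A).liftQ J hker ∘ₗ A.quotKerEquivRange.symm.toLinearMap
  have hφ (p : P) (h : A p ∈ LinearMap.range A) : φ ⟨A p, h⟩ = J p := by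
    have : A.quotKerEquivRange.symm ⟨A p, h⟩ = (LinearMap.ker A).mkQ p :=
      A.quotKerEquivRange_symm_apply_image p h
    simp [φ, this]
  obtain ⟨g, hg, hpos⟩ := riesz_extension (PointedCone.positive ℝ Z) ⟨LinearMap.range A, φ⟩
    (by
      rintro ⟨_, p, rfl⟩ hp
      exact (hJ p hp).trans_eq (hφ p _).symm)
    (fun z ↦ let ⟨p, hp⟩ := hA z; ⟨⟨A p, p, rfl⟩, hp⟩)
  exact ⟨g, fun p ↦ (hg ⟨A p, p, rfl⟩).trans (hφ p _), hpos⟩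

/-- Positive functionals on `C(S, ℝ)`, with `S` compact, are integrals against finite measures
concentrated on `S`. -/
lemma exists_finite_measure_of_positive {α : Type*} [TopologicalSpace α] [T2Space α]
    [MeasurableSpace α] [BorelSpace α] {S : Set α} (hS : IsCompact S)
    (Λ : C(S, ℝ) →ₗ[ℝ] ℝ) (hΛ : ∀ g, 0 ≤ g → 0 ≤ Λ g) :
    ∃ μ : Measure α, IsFiniteMeasure μ ∧ μ Sᶜ = 0 ∧
      ∀ g : C(α, ℝ), ∫ x, g x ∂μ = Λ (g.restrict S) := by
  have : CompactSpace S := isCompact_iff_compactSpace.mp hS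
  let T : CompactlySupportedContinuousMap S ℝ →ₚ[ℝ] ℝ := PositiveLinearMap.mk₀
    { toFun := fun g ↦ Λ g.toContinuousMap
      map_add' := fun g h ↦ map_add Λ g.toContinuousMap h.toContinuousMap
      map_smul' := fun c g ↦ map_smul Λ c g.toContinuousMap }
    (fun g hg ↦ hΛ _ hg)
  refine ⟨(RealRMK.rieszMeasure T).map (Subtype.val : S → α), inferInstance, ?_, fun g ↦ ?_⟩
  · rw [Measure.map_apply measurable_subtype_coe hS.measurableSet.compl]
    convert measure_empty (μ := RealRMK.rieszMeasure T)
    ext x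
    simp
  · rw [(MeasurableEmbedding.subtype_coe hS.measurableSet).integral_map]
    exact RealRMK.integral_rieszMeasure T ⟨g.restrict S, HasCompactSupport.of_compactSpace _⟩

lemma msupport_subset_of_measure_compl_eq_zero {α : Type*} [TopologicalSpace α]
    [MeasurableSpace α] {μ : Measure α} {S : Set α} (hS : IsClosed S) (h : μ Sᶜ = 0) :
    msupport μ ⊆ S := by
  intro x hx
  by_contra hxS
  exact (hx Sᶜ hS.isOpen_compl hxS).ne' h

lemma measure_compl_eq_zero_of_msupport_subset {α : Type*} [TopologicalSpace α]
    [SecondCountableTopology α] [MeasurableSpace α] {μ : Measure α} {S : Set α}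
    (h : msupport μ ⊆ S) : μ Sᶜ = 0 := by
  refine measure_null_of_locally_null _ fun x hx ↦ ?_
  have hx' : x ∉ msupport μ := fun h' ↦ hx (h h')
  simp only [msupport, Set.mem_ofPred_eq, not_forall, not_lt, nonpos_iff_eq_zero] at hx'
  obtain ⟨s, hs, hxs, hμ⟩ := hx'
  exact ⟨s, mem_nhdsWithin_of_mem_nhds (hs.mem_nhds hxs), hμ⟩

lemma integrable_of_measure_compl_eq_zero {α : Type*} [TopologicalSpace α] [T2Space α]
    [MeasurableSpace α] [BorelSpace α] {μ : Measure α} [IsFiniteMeasure μ] {S : Set α}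
    (hS : IsCompact S) (h : μ Sᶜ = 0) {g : α → ℝ} (hg : Continuous g) : Integrable g μ := by
  have := hg.continuousOn.integrableOn_compact (μ := μ) hS
  rwa [IntegrableOn, Measure.restrict_eq_self_of_ae_mem (measure_eq_zero_iff_ae_notMem.mp h |>.mono
    fun x hx ↦ not_not.mp hx)] at this

section LinearProgram

variable {n m : ℕ} (X : Set (EuclideanSpace ℝ (Fin n))) (U : Set (EuclideanSpace ℝ (Fin m)))
  {f : EuclideanSpace ℝ (Fin n) → EuclideanSpace ℝ (Fin m) → EuclideanSpace ℝ (Fin n)}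
  {β : ℝ}

lemma continuous_fderiv_apply_field
    (hf : Continuous fun p : EuclideanSpace ℝ (Fin n) × EuclideanSpace ℝ (Fin m) => f p.1 p.2)
    {v : EuclideanSpace ℝ (Fin n) → ℝ} (hv : ContDiff ℝ 1 v) :
    Continuous fun p : EuclideanSpace ℝ (Fin n) × EuclideanSpace ℝ (Fin m) =>
      fderiv ℝ v p.1 (f p.1 p.2) :=
  ((hv.continuous_fderiv one_ne_zero).comp continuous_fst).clm_apply hf

/-- The continuously differentiable real functions. -/
def contDiffOneSubmodule (n : ℕ) : Submodule ℝ (EuclideanSpace ℝ (Fin n) → ℝ) where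
  carrier := {v | ContDiff ℝ 1 v}
  add_mem' := fun {a b} (ha : ContDiff ℝ 1 a) (hb : ContDiff ℝ 1 b) ↦ ha.add hb
  zero_mem' := show ContDiff ℝ 1 fun _ ↦ 0 from contDiff_const
  smul_mem' := fun c v (hv : ContDiff ℝ 1 v) ↦ hv.const_smul c

lemma mem_contDiffOneSubmodule {n : ℕ} {v : EuclideanSpace ℝ (Fin n) → ℝ} :
    v ∈ contDiffOneSubmodule n ↔ ContDiff ℝ 1 v := Iff.rfl

lemma contDiffOneSubmodule.contDiff {n : ℕ} (v : contDiffOneSubmodule n) : ContDiff ℝ 1 v.1 :=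
  mem_contDiffOneSubmodule.mp v.2

/-- The discounted generator `v ↦ β v - ∇v · f`. -/
noncomputable def discountedGenerator
    (hf : Continuous fun p : EuclideanSpace ℝ (Fin n) × EuclideanSpace ℝ (Fin m) => f p.1 p.2)
    (β : ℝ) :
    contDiffOneSubmodule n →ₗ[ℝ] C(EuclideanSpace ℝ (Fin n) × EuclideanSpace ℝ (Fin m), ℝ) where
  toFun v := ⟨fun p ↦ β * v.1 p.1 - fderiv ℝ v.1 p.1 (f p.1 p.2),
    (continuous_const.mul ((contDiffOneSubmodule.contDiff v).continuous.comp continuous_fst)).sub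
      (continuous_fderiv_apply_field hf (contDiffOneSubmodule.contDiff v))⟩
  map_add' a b := by
    ext p
    have := fderiv_add ((contDiffOneSubmodule.contDiff a).differentiable one_ne_zero p.1)
      ((contDiffOneSubmodule.contDiff b).differentiable one_ne_zero p.1)
    simp [this]
    ring
  map_smul' c a := by
    ext p
    have := fderiv_const_smul ((contDiffOneSubmodule.contDiff a).differentiable one_ne_zero p.1) c
    simp [this]
    ring

/-- The constraint map `(v, w, t) ↦ (β v - ∇v · f, w - v - t, w)` of the homogenized dual LP. -/
noncomputable def dualConstraintMap
    (hf : Continuous fun p : EuclideanSpace ℝ (Fin n) × EuclideanSpace ℝ (Fin m) => f p.1 p.2)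
    (β : ℝ) :
    contDiffOneSubmodule n × C(EuclideanSpace ℝ (Fin n), ℝ) × ℝ →ₗ[ℝ]
      C((X ×ˢ U : Set (EuclideanSpace ℝ (Fin n) × EuclideanSpace ℝ (Fin m))), ℝ) ×
        C(X, ℝ) × C(X, ℝ) where
  toFun p := ((discountedGenerator hf β p.1).restrict (X ×ˢ U),
    ContinuousMap.restrict X (p.2.1 - ⟨p.1.1, (contDiffOneSubmodule.contDiff p.1).continuous⟩
      - ContinuousMap.const _ p.2.2),
    p.2.1.restrict X)
  map_add' a b := by
    ext x
    · simp
    · simp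
      ring
    · simp
  map_smul' c a := by
    ext x
    · simp
    · simp
      ring
    · simp

variable {X U}

lemma integrable_restrict_of_continuous (hX : IsCompact X) {w : EuclideanSpace ℝ (Fin n) → ℝ}
    (hw : Continuous w) : Integrable w (volume.restrict X) :=
  hw.continuousOn.integrableOn_compact hX

/-- The objective `(v, w, t) ↦ ∫_X w - t d` of the homogenized dual LP. -/
noncomputable def dualObjective (hX : IsCompact X) (d : ℝ) :
    contDiffOneSubmodule n × C(EuclideanSpace ℝ (Fin n), ℝ) × ℝ →ₗ[ℝ] ℝ where
  toFun p := (∫ x in X, p.2.1 x) - p.2.2 * d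
  map_add' a b := by
    have := integral_add (integrable_restrict_of_continuous hX a.2.1.continuous)
      (integrable_restrict_of_continuous hX b.2.1.continuous)
    simp [this]
    ring
  map_smul' c a := by
    simp [integral_const_mul]
    ring

lemma dualConstraintMap_nonneg_iff
    (hf : Continuous fun p : EuclideanSpace ℝ (Fin n) × EuclideanSpace ℝ (Fin m) => f p.1 p.2)
    (v : contDiffOneSubmodule n) (w : C(EuclideanSpace ℝ (Fin n), ℝ)) (t : ℝ) :
    0 ≤ dualConstraintMap X U hf β (v, w, t) ↔
      (∀ x ∈ X, ∀ u ∈ U, fderiv ℝ v.1 x (f x u) ≤ β * v.1 x) ∧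
      (∀ x ∈ X, v.1 x + t ≤ w x) ∧ ∀ x ∈ X, 0 ≤ w x := by
  rw [Prod.le_def, Prod.le_def]
  refine and_congr ?_ (and_congr ?_ ?_)
  · refine ⟨fun h x hx u hu ↦ sub_nonneg.mp (h ⟨(x, u), hx, hu⟩),
      fun h p ↦ sub_nonneg.mpr (h _ p.2.1 _ p.2.2)⟩
  · refine ⟨fun h x hx ↦ ?_, fun h x ↦ ?_⟩
    · have : 0 ≤ w x - v.1 x - t := h ⟨x, hx⟩
      linarith
    · change 0 ≤ w x - v.1 x - t
      linarith [h x x.2]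
  · exact ⟨fun h x hx ↦ h ⟨x, hx⟩, fun h x ↦ h x x.2⟩

/-- Weak duality. -/
lemma FeasibleC.le_of_dualFeasC (hX : IsCompact X) (hU : IsCompact U)
    (hf : Continuous fun p : EuclideanSpace ℝ (Fin n) × EuclideanSpace ℝ (Fin m) => f p.1 p.2)
    {μ₀ μh : Measure (EuclideanSpace ℝ (Fin n))}
    {μ : Measure (EuclideanSpace ℝ (Fin n) × EuclideanSpace ℝ (Fin m))}
    (h : FeasibleC X U f β μ₀ μ μh) {v w : EuclideanSpace ℝ (Fin n) → ℝ}
    (hd : DualFeasC X U f β v w) : (μ₀ X).toReal ≤ ∫ x in X, w x := by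
  obtain ⟨_, _, _, hs₀, hsh, hs, hL, hsum⟩ := h
  obtain ⟨hv, hw, hgen, hvw, hw0⟩ := hd
  have h₀ := measure_compl_eq_zero_of_msupport_subset hs₀
  have h₁ := measure_compl_eq_zero_of_msupport_subset hs
  have hh := measure_compl_eq_zero_of_msupport_subset hsh
  have ae₀ : ∀ᵐ x ∂μ₀, x ∈ X := h₀
  have aeh : ∀ᵐ x ∂μh, x ∈ X := hh
  have ae₁ : ∀ᵐ p ∂μ, p ∈ X ×ˢ U := h₁
  have hgi := integrable_of_measure_compl_eq_zero (hX.prod hU) h₁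
    (continuous_fderiv_apply_field hf hv)
  have hvi := integrable_of_measure_compl_eq_zero (hX.prod hU) h₁
    (hv.continuous.comp continuous_fst)
  have hmono : ∫ p, fderiv ℝ v p.1 (f p.1 p.2) ∂μ ≤ ∫ p, β * v p.1 ∂μ :=
    integral_mono_ae hgi (hvi.const_mul β) (ae₁.mono fun p hp ↦ hgen _ hp.1 _ hp.2)
  rw [integral_const_mul, hL v hv] at hmono
  have hi₀ {g : EuclideanSpace ℝ (Fin n) → ℝ} (hg : Continuous g) : Integrable g μ₀ :=
    integrable_of_measure_compl_eq_zero hX h₀ hg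
  have hwv : ∫ x, (v x + 1) ∂μ₀ ≤ ∫ x, w x ∂μ₀ :=
    integral_mono_ae (hi₀ (hv.continuous.add continuous_const)) (hi₀ hw)
      (ae₀.mono fun x hx ↦ hvw x hx)
  rw [integral_add (hi₀ hv.continuous) (integrable_const 1), integral_const] at hwv
  have hwh : 0 ≤ ∫ x, w x ∂μh := integral_nonneg_of_ae (aeh.mono fun x hx ↦ hw0 x hx)
  rw [← hsum, integral_add_measure (hi₀ hw) (integrable_of_measure_compl_eq_zero hX hh hw)]
  have hle : (μ₀ X).toReal ≤ μ₀.real Set.univ := measureReal_mono (Set.subset_univ X)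
  simp only [smul_eq_mul, mul_one] at hwv
  linarith

/-- The dual infimum is attained by a primal feasible triple. -/
lemma exists_feasibleC_eq_sInf (hX : IsCompact X) (hU : IsCompact U)
    (hf : Continuous fun p : EuclideanSpace ℝ (Fin n) × EuclideanSpace ℝ (Fin m) => f p.1 p.2)
    (hβ : 0 < β) :
    ∃ μ₀ μ μh, FeasibleC X U f β μ₀ μ μh ∧
      sInf {r : ℝ | ∃ v w, DualFeasC X U f β v w ∧ r = ∫ x in X, w x ∂volume}
        = (μ₀ X).toReal := by
  set D := {r : ℝ | ∃ v w, DualFeasC X U f β v w ∧ r = ∫ x in X, w x ∂volume}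
  have hD0 : ∀ r ∈ D, 0 ≤ r := by
    rintro _ ⟨v, w, h, rfl⟩
    exact setIntegral_nonneg hX.measurableSet h.2.2.2.2
  have : CompactSpace X := isCompact_iff_compactSpace.mp hX
  have : CompactSpace (X ×ˢ U : Set (EuclideanSpace ℝ (Fin n) × EuclideanSpace ℝ (Fin m))) :=
    isCompact_iff_compactSpace.mp (hX.prod hU)
  obtain ⟨Λ, hΛ, hpos⟩ := exists_positive_functional_comp_eq (dualConstraintMap X U hf β)
    (dualObjective hX (sInf D))
    (by
      rintro ⟨v, w, t⟩ h
      rw [dualConstraintMap_nonneg_iff] at h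
      obtain ⟨hgen, hvw, hw⟩ := h
      change 0 ≤ (∫ x in X, w x) - t * sInf D
      rcases le_or_gt t 0 with ht | ht
      · have h₁ : 0 ≤ ∫ x in X, w x := setIntegral_nonneg hX.measurableSet hw
        nlinarith [Real.sInf_nonneg hD0]
      · have hmem : t⁻¹ * ∫ x in X, w x ∈ D := by
          refine ⟨t⁻¹ • v.1, t⁻¹ • ⇑w, ⟨contDiffOneSubmodule.contDiff (t⁻¹ • v),
            w.continuous.const_smul _, fun x hx u hu ↦ ?_, fun x hx ↦ ?_, fun x hx ↦ ?_⟩, ?_⟩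
          · rw [fderiv_const_smul ((contDiffOneSubmodule.contDiff v).differentiable one_ne_zero x)]
            have := mul_le_mul_of_nonneg_left (hgen x hx u hu) (inv_pos.mpr ht).le
            simp only [FunLike.coe_smul, Pi.smul_apply, smul_eq_mul]
            linarith
          · have := mul_le_mul_of_nonneg_left (hvw x hx) (inv_pos.mpr ht).le
            rw [mul_add, inv_mul_cancel₀ ht.ne'] at this
            simpa using this
          · exact mul_nonneg (inv_pos.mpr ht).le (hw x hx)
          · simp [integral_const_mul]
        have := mul_le_mul_of_nonneg_left (csInf_le ⟨0, hD0⟩ hmem) ht.le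
        rw [mul_inv_cancel_left₀ ht.ne'] at this
        linarith)
    (by
      rintro ⟨a, b, c⟩
      let M := ‖a‖ + ‖b‖ + ‖c‖
      have ha := norm_nonneg a
      have hb := norm_nonneg b
      have hc := norm_nonneg c
      have hM : 0 ≤ M / β := by positivity
      refine ⟨(⟨fun _ ↦ M / β, mem_contDiffOneSubmodule.mpr contDiff_const⟩,
        ContinuousMap.const _ (M + M / β), 0), ?_⟩
      rw [Prod.le_def, Prod.le_def]
      refine ⟨fun p ↦ ?_, fun x ↦ ?_, fun x ↦ ?_⟩
      · change 0 ≤ β * (M / β) - fderiv ℝ (fun _ ↦ M / β) p.1.1 (f p.1.1 p.1.2) + a p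
        have := ContinuousMap.neg_norm_le_apply a p
        rw [mul_div_cancel₀ _ hβ.ne', fderiv_fun_const]
        simp only [Pi.zero_apply, FunLike.coe_zero]
        linarith
      · change 0 ≤ M + M / β - M / β - 0 + b x
        have := ContinuousMap.neg_norm_le_apply b x
        linarith
      · change 0 ≤ M + M / β + c x
        have := ContinuousMap.neg_norm_le_apply c x
        linarith)
  obtain ⟨μ, _, hμ, hμi⟩ := exists_finite_measure_of_positive (hX.prod hU)
    (Λ ∘ₗ LinearMap.inl ℝ _ _) (fun g hg ↦ hpos _ ⟨hg, le_rfl⟩)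
  obtain ⟨μ₀, _, hμ₀, hμ₀i⟩ := exists_finite_measure_of_positive hX
    (Λ ∘ₗ LinearMap.inr ℝ _ _ ∘ₗ LinearMap.inl ℝ _ _)
    (fun g hg ↦ hpos _ ⟨le_rfl, hg, le_rfl⟩)
  obtain ⟨μh, _, hμh, hμhi⟩ := exists_finite_measure_of_positive hX
    (Λ ∘ₗ LinearMap.inr ℝ _ _ ∘ₗ LinearMap.inr ℝ _ _)
    (fun g hg ↦ hpos _ ⟨le_rfl, le_rfl, hg⟩)
  have key (v : contDiffOneSubmodule n) (w : C(EuclideanSpace ℝ (Fin n), ℝ)) (t : ℝ) :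
      ∫ p, discountedGenerator hf β v p ∂μ
        + ∫ x, (w x - v.1 x - t) ∂μ₀
        + ∫ x, w x ∂μh = (∫ x in X, w x) - t * sInf D := by
    have h₀ := hμ₀i (w - ⟨v.1, (contDiffOneSubmodule.contDiff v).continuous⟩ -
      ContinuousMap.const _ t)
    simp only [ContinuousMap.sub_apply, ContinuousMap.coe_mk, ContinuousMap.const_apply] at h₀
    rw [hμi, h₀, hμhi]
    refine Eq.trans ?_ (hΛ (v, w, t))
    simp only [LinearMap.comp_apply, ← map_add]
    congr 1
    simp [dualConstraintMap]
  have : IsFiniteMeasure (volume.restrict X) := ⟨by simpa using hX.measure_lt_top⟩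
  refine ⟨μ₀, μ, μh, ⟨inferInstance, inferInstance, inferInstance,
    msupport_subset_of_measure_compl_eq_zero hX.isClosed hμ₀,
    msupport_subset_of_measure_compl_eq_zero hX.isClosed hμh,
    msupport_subset_of_measure_compl_eq_zero (hX.prod hU).isClosed hμ, fun v hv ↦ ?_, ?_⟩, ?_⟩
  · have h := key ⟨v, mem_contDiffOneSubmodule.mpr hv⟩ 0 0
    simp only [discountedGenerator, LinearMap.coe_mk, AddHom.coe_mk, ContinuousMap.coe_mk,
      ContinuousMap.zero_apply, zero_sub, sub_zero, integral_neg, integral_zero, zero_mul,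
      add_zero] at h
    rw [integral_sub, integral_const_mul] at h
    · linarith
    · exact (integrable_of_measure_compl_eq_zero (hX.prod hU) hμ
        (hv.continuous.comp continuous_fst)).const_mul β
    · exact integrable_of_measure_compl_eq_zero (hX.prod hU) hμ
        (continuous_fderiv_apply_field hf hv)
  · refine ext_of_forall_integral_eq_of_IsFiniteMeasure fun w ↦ ?_
    have h := key 0 w.toContinuousMap 0
    rw [integral_add_measure (w.integrable _) (w.integrable _)]
    simpa using h
  · have h := key 0 0 1
    have hX₀ : μ₀ X = μ₀ Set.univ := by
      rw [← measure_add_measure_compl hX.measurableSet, hμ₀, add_zero]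
    rw [hX₀]
    simpa [measureReal_def] using h.symm

end LinearProgram

theorem continuous_no_duality_gap {n m : ℕ}
    (X : Set (EuclideanSpace ℝ (Fin n))) (U : Set (EuclideanSpace ℝ (Fin m)))
    (hX : IsCompact X) (hU : IsCompact U)
    (f : EuclideanSpace ℝ (Fin n) → EuclideanSpace ℝ (Fin m) → EuclideanSpace ℝ (Fin n))
    (hf : Continuous fun p : EuclideanSpace ℝ (Fin n) × EuclideanSpace ℝ (Fin m) => f p.1 p.2)
    (β : ℝ) (hβ : 0 < β) :
    sSup {r : ℝ | ∃ μ₀ μ μh, FeasibleC X U f β μ₀ μ μh ∧ r = (μ₀ X).toReal}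
      = sInf {r : ℝ | ∃ v w, DualFeasC X U f β v w ∧ r = ∫ x in X, w x ∂volume} := by
  have hne : {r : ℝ | ∃ v w, DualFeasC X U f β v w ∧ r = ∫ x in X, w x ∂volume}.Nonempty :=
    ⟨_, fun _ ↦ 0, fun _ ↦ 1, ⟨contDiff_const, continuous_const, by simp, by simp, by simp⟩, rfl⟩
  have hgreatest : IsGreatest
      {r : ℝ | ∃ μ₀ μ μh, FeasibleC X U f β μ₀ μ μh ∧ r = (μ₀ X).toReal}
      (sInf {r : ℝ | ∃ v w, DualFeasC X U f β v w ∧ r = ∫ x in X, w x ∂volume}) := by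
    refine ⟨exists_feasibleC_eq_sInf hX hU hf hβ, ?_⟩
    rintro _ ⟨μ₀, μ, μh, h, rfl⟩
    refine le_csInf hne ?_
    rintro _ ⟨v, w, hd, rfl⟩
    exact h.le_of_dualFeasC hX hU hf hd
  exact hgreatest.csSup_eq
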